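/- arXiv:2511.07029 — 4 statements merged into one kernel-verified Lean document; each statement's English description precedes it below -/
import Mathlib

section
/- Let E be a real inner product space, let (u_ν)_{ν ∈ Fin K} be an orthonormal family in E, let p ∈ E with ‖p‖ ≤ 1, let ν★ ∈ Fin K, and let δ > 0 satisfy ⟨u_{ν★}, p⟩² − ⟨u_ν, p⟩² ≥ δ for all ν ≠ ν★. If Δ ∈ E satisfies 2‖Δ‖ + ‖Δ‖² < δ/2, then ⟨u_{ν★}, p + Δ⟩² > ⟨u_ν, p + Δ⟩² for all ν ≠ ν★. -/
open InnerProductSpace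

theorem abs_norm_add_sq_sub_norm_sq_le {F : Type*} [SeminormedAddGroup F] (x y : F) :
    |‖x + y‖ ^ 2 - ‖x‖ ^ 2| ≤ 2 * ‖x‖ * ‖y‖ + ‖y‖ ^ 2 := by
  have hupper : ‖x + y‖ ≤ ‖x‖ + ‖y‖ := norm_add_le x y
  have hlower : ‖x‖ ≤ ‖x + y‖ + ‖y‖ := norm_le_add_norm_add x y
  have hdiff : |‖x + y‖ - ‖x‖| ≤ ‖y‖ := by
    rw [abs_le]
    constructor <;> linarith
  calc |‖x + y‖ ^ 2 - ‖x‖ ^ 2|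
      = (‖x + y‖ + ‖x‖) * |‖x + y‖ - ‖x‖| := by
        rw [sq_sub_sq, abs_mul, abs_of_nonneg (by positivity)]
    _ ≤ (‖x‖ + ‖y‖ + ‖x‖) * ‖y‖ := by gcongr
    _ = 2 * ‖x‖ * ‖y‖ + ‖y‖ ^ 2 := by ring

section

variable {𝕜 E : Type*} [RCLike 𝕜] [SeminormedAddCommGroup E] [InnerProductSpace 𝕜 E]

theorem abs_norm_inner_add_sq_sub_norm_inner_sq_le (v p Δ : E) :
    |‖⟪v, p + Δ⟫_𝕜‖ ^ 2 - ‖⟪v, p⟫_𝕜‖ ^ 2| ≤ ‖v‖ ^ 2 * (2 * ‖p‖ * ‖Δ‖ + ‖Δ‖ ^ 2) := by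
  rw [inner_add_right]
  calc |‖⟪v, p⟫_𝕜 + ⟪v, Δ⟫_𝕜‖ ^ 2 - ‖⟪v, p⟫_𝕜‖ ^ 2|
      ≤ 2 * ‖⟪v, p⟫_𝕜‖ * ‖⟪v, Δ⟫_𝕜‖ + ‖⟪v, Δ⟫_𝕜‖ ^ 2 := abs_norm_add_sq_sub_norm_sq_le _ _
    _ ≤ 2 * (‖v‖ * ‖p‖) * (‖v‖ * ‖Δ‖) + (‖v‖ * ‖Δ‖) ^ 2 := by
        gcongr <;> exact norm_inner_le_norm _ _
    _ = ‖v‖ ^ 2 * (2 * ‖p‖ * ‖Δ‖ + ‖Δ‖ ^ 2) := by ring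

theorem dominant_frequency_stable_general {ι : Type*} {u : ι → E} (hu : ∀ ν, ‖u ν‖ ≤ 1)
    {p Δ : E} {νstar : ι} {δ : ℝ}
    (hgap : ∀ ν, ν ≠ νstar → δ ≤ ‖⟪u νstar, p⟫_𝕜‖ ^ 2 - ‖⟪u ν, p⟫_𝕜‖ ^ 2)
    (hΔ : 2 * ‖p‖ * ‖Δ‖ + ‖Δ‖ ^ 2 < δ / 2) (ν : ι) (hν : ν ≠ νstar) :
    ‖⟪u ν, p + Δ⟫_𝕜‖ ^ 2 < ‖⟪u νstar, p + Δ⟫_𝕜‖ ^ 2 := by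
  have energy_change_lt (μ : ι) :
      |‖⟪u μ, p + Δ⟫_𝕜‖ ^ 2 - ‖⟪u μ, p⟫_𝕜‖ ^ 2| < δ / 2 :=
    calc |‖⟪u μ, p + Δ⟫_𝕜‖ ^ 2 - ‖⟪u μ, p⟫_𝕜‖ ^ 2|
        ≤ ‖u μ‖ ^ 2 * (2 * ‖p‖ * ‖Δ‖ + ‖Δ‖ ^ 2) :=
          abs_norm_inner_add_sq_sub_norm_inner_sq_le (u μ) p Δ
      _ ≤ 2 * ‖p‖ * ‖Δ‖ + ‖Δ‖ ^ 2 :=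
          mul_le_of_le_one_left (by positivity) (pow_le_one₀ (norm_nonneg _) (hu μ))
      _ < δ / 2 := hΔ
  have hstar := (abs_lt.mp (energy_change_lt νstar)).1
  have hother := (abs_lt.mp (energy_change_lt ν)).2
  linarith [hgap ν hν]

end

theorem dominant_frequency_stable {E : Type*} [NormedAddCommGroup E]
    [InnerProductSpace ℝ E] (K : ℕ) (u : Fin K → E) (hu : Orthonormal ℝ u)
    (p : E) (hp : ‖p‖ ≤ 1) (νstar : Fin K) (δ : ℝ) (hδ : 0 < δ)
    (hgap : ∀ ν : Fin K, ν ≠ νstar → δ ≤ ⟪u νstar, p⟫_ℝ ^ 2 - ⟪u ν, p⟫_ℝ ^ 2)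
    (Δ : E) (hΔ : 2 * ‖Δ‖ + ‖Δ‖ ^ 2 < δ / 2) :
    ∀ ν : Fin K, ν ≠ νstar →
      ⟪u ν, p + Δ⟫_ℝ ^ 2 < ⟪u νstar, p + Δ⟫_ℝ ^ 2 := by
  have hΔp : 2 * ‖p‖ * ‖Δ‖ + ‖Δ‖ ^ 2 < δ / 2 := hΔ.trans_le' (by gcongr; linarith)
  simpa only [Real.norm_eq_abs, sq_abs] using
    dominant_frequency_stable_general (𝕜 := ℝ) (fun ν ↦ (hu.norm_eq_one ν).le)
      (by simpa only [Real.norm_eq_abs, sq_abs] using hgap) hΔp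
end

section
/- Let N ≥ 1, let a, t : Fin N → ℝ with a_i ≥ 0 and t_i > 0 for all i, let q ≤ N, and let t_{(1)} ≤ t_{(2)} ≤ ⋯ ≤ t_{(N)} be the values of t sorted in ascending order. If ∑_{i} a_i² < ∑_{j=1}^{q} t_{(j)}², then the number of indices i with a_i ≥ t_i is strictly less than q. -/
theorem castLE_le_of_strictMono {q N : ℕ} (hq : q ≤ N) {e : Fin q → Fin N} (he : StrictMono e)
    (j : Fin q) : Fin.castLE hq j ≤ e j := by
  have hcard : (Finset.Iio j).card ≤ (Finset.Iio (e j)).card :=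
    Finset.card_le_card_of_injOn e
      (fun _ hi => Finset.mem_coe.2 (Finset.mem_Iio.2 (he (Finset.mem_Iio.1 hi))))
      he.injective.injOn
  rwa [Fin.card_Iio, Fin.card_Iio] at hcard

section OrderedAddCommMonoid

variable {ι M : Type*} [AddCommMonoid M] [Preorder M] [IsOrderedAddMonoid M] {q N : ℕ}

theorem sum_castLE_le_sum_of_monotone (hq : q ≤ N) {f : Fin N → M} (hf : Monotone f)
    {s : Finset (Fin N)} (hs : s.card = q) :
    ∑ j : Fin q, f (Fin.castLE hq j) ≤ ∑ i ∈ s, f i := by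
  let e : Fin q ↪o Fin N := s.orderEmbOfFin hs
  calc ∑ j : Fin q, f (Fin.castLE hq j)
      ≤ ∑ j : Fin q, f (e j) :=
        Finset.sum_le_sum fun j _ => hf (castLE_le_of_strictMono hq e.strictMono j)
    _ = ∑ i ∈ Finset.univ.map e.toEmbedding, f i := (Finset.sum_map _ _ _).symm
    _ = ∑ i ∈ s, f i := by rw [s.map_orderEmbOfFin_univ hs]

theorem sum_sorted_castLE_le_sum (hq : q ≤ N) {w : ι → M} (σ : Fin N ≃ ι)
    (hσ : Monotone (w ∘ σ)) {s : Finset ι} (hs : s.card = q) :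
    ∑ j : Fin q, w (σ (Fin.castLE hq j)) ≤ ∑ i ∈ s, w i := by
  calc ∑ j : Fin q, w (σ (Fin.castLE hq j))
      ≤ ∑ k ∈ s.map σ.symm.toEmbedding, w (σ k) :=
        sum_castLE_le_sum_of_monotone hq hσ ((Finset.card_map _).trans hs)
    _ = ∑ i ∈ s, w i := by
        simp only [Finset.sum_map, Equiv.coe_toEmbedding, Equiv.apply_symm_apply]

/-- Any `q` points whose costs `b` reach their weights `w` already cost at least the sum of the `q`
smallest weights. Thresholds and perturbations enter through `w = t ^ 2` and `b = a ^ 2`. -/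
theorem flipped_points_lt_general [Fintype ι] [DecidableLE M] (hq : q ≤ N) {w b : ι → M}
    (hb : ∀ i, 0 ≤ b i) (σ : Fin N ≃ ι) (hσ : Monotone (w ∘ σ))
    (hbudget : ∑ i, b i < ∑ j : Fin q, w (σ (Fin.castLE hq j))) :
    (Finset.univ.filter fun i => w i ≤ b i).card < q := by
  by_contra! hcard
  obtain ⟨s, hsub, hs⟩ := Finset.exists_subset_card_eq hcard
  refine hbudget.not_ge ?_
  calc ∑ j : Fin q, w (σ (Fin.castLE hq j))
      ≤ ∑ i ∈ s, w i := sum_sorted_castLE_le_sum hq σ hσ hs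
    _ ≤ ∑ i ∈ s, b i := Finset.sum_le_sum fun i hi => (Finset.mem_filter.1 (hsub hi)).2
    _ ≤ ∑ i, b i := Finset.sum_le_univ_sum_of_nonneg hb

end OrderedAddCommMonoid

theorem flipped_points_lt (N : ℕ) (hN : 1 ≤ N) (a t : Fin N → ℝ)
    (ha : ∀ i, 0 ≤ a i) (ht : ∀ i, 0 < t i) (q : ℕ) (hq : q ≤ N)
    (hbudget : ∑ i, a i ^ 2 < ∑ j : Fin q, t (Tuple.sort t (Fin.castLE hq j)) ^ 2) :
    (Finset.univ.filter (fun i : Fin N => t i ≤ a i)).card < q := by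
  have hsorted : Monotone ((fun i => t i ^ 2) ∘ Tuple.sort t) := fun _ _ hij =>
    pow_le_pow_left₀ (ht _).le (Tuple.monotone_sort t hij) 2
  refine lt_of_le_of_lt (Finset.card_le_card ?_)
    (flipped_points_lt_general hq (fun i => sq_nonneg (a i)) (Tuple.sort t) hsorted hbudget)
  exact Finset.monotone_filter_right _ fun i _ hflip => pow_le_pow_left₀ (ht i).le hflip 2
end

section
/- Let N, m, κ ≥ 1 be natural numbers, set α := ⌊(m−1)/2⌋ and p := ⌊α/κ⌋ and assume p + 1 ≤ N. Let t : Fin N → ℝ with t_i > 0, let t_{(1)} ≤ ⋯ ≤ t_{(N)} be its sorted values, let a : Fin N → ℝ with a_i ≥ 0, let M : Fin N → Finset (Fin m) with |M(i)| ≤ κ for all i, let C be a type of labels, v' : Fin m → C, and y ∈ C. Assume: (i) ∑_i a_i² < ∑_{j=1}^{p+1} t_{(j)}²; (ii) for every slice j ∈ Fin m with v'(j) ≠ y there exists i with j ∈ M(i) and a_i ≥ t_i. Then for every label z ≠ y, the number of slices j with v'(j) = y is strictly greater than the number of slices j with v'(j) = z. -/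
/-!
Every point pushed past its threshold costs at least that threshold, so pushing `k` points past
theirs costs at least the sum of the `k` smallest thresholds. A budget below this sum therefore
moves fewer than `k` points, and each of these touches at most `κ` slices. As long as the touched
slices are fewer than half of all slices, the label `y` keeps an absolute majority.
-/

open Finset

section SmallestValues

variable {k N : ℕ}

theorem castLE_le_of_strictMono_s10 {f : Fin k → Fin N} (hf : StrictMono f) (hk : k ≤ N) (j : Fin k) :
    Fin.castLE hk j ≤ f j :=
  Fin.le_def.2 <| calc
    (j : ℕ) = #(Iio j) := (Fin.card_Iio j).symm
    _ ≤ #(Iio (f j)) := card_le_card_of_injOn f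
        (fun _ hi => mem_coe.2 <| mem_Iio.2 <| hf <| mem_Iio.1 hi) hf.injective.injOn
    _ = f j := Fin.card_Iio (f j)

variable {R : Type*} [AddCommMonoid R] [Preorder R] [IsOrderedAddMonoid R]

theorem sum_castLE_le_sum_of_monotone_s10 {g : Fin N → R} (hg : Monotone g) (hk : k ≤ N)
    {S : Finset (Fin N)} (hS : #S = k) :
    ∑ j : Fin k, g (Fin.castLE hk j) ≤ ∑ i ∈ S, g i := by
  rw [← S.map_orderEmbOfFin_univ hS, sum_map]
  exact sum_le_sum fun j _ =>
    hg (castLE_le_of_strictMono_s10 (S.orderEmbOfFin hS).strictMono hk j)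

theorem card_lt_of_sum_lt_sum_smallest {P : Type*} [Fintype P] {τ c : P → R} {e : Fin N ≃ P}
    (he : Monotone (τ ∘ e)) (hk : k ≤ N) (hc : ∀ i, 0 ≤ c i)
    (hbudget : ∑ i, c i < ∑ j : Fin k, τ (e (Fin.castLE hk j)))
    {S : Finset P} (hS : ∀ i ∈ S, τ i ≤ c i) : #S < k := by
  by_contra! hcard
  obtain ⟨T, hTS, hT⟩ := exists_subset_card_eq hcard
  refine hbudget.not_ge ?_
  calc ∑ j : Fin k, τ (e (Fin.castLE hk j))
      ≤ ∑ i ∈ T.map e.symm.toEmbedding, τ (e i) :=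
        sum_castLE_le_sum_of_monotone_s10 he hk (by rw [card_map, hT])
    _ = ∑ i ∈ T, τ i := by simp only [sum_map, Equiv.coe_toEmbedding, Equiv.apply_symm_apply]
    _ ≤ ∑ i ∈ T, c i := sum_le_sum fun i hi => hS i (hTS hi)
    _ ≤ ∑ i, c i := sum_le_univ_sum_of_nonneg hc

end SmallestValues

section Majority

variable {ι : Type*}

theorem card_le_card_mul_of_forall_exists_mem {P : Type*} {B : Finset ι} {S : Finset P}
    {M : P → Finset ι} {κ : ℕ} (hM : ∀ i ∈ S, #(M i) ≤ κ) (hB : ∀ j ∈ B, ∃ i ∈ S, j ∈ M i) :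
    #B ≤ #S * κ := by
  classical
  exact (card_le_card fun j hj => mem_biUnion.2 (hB j hj)).trans
    (card_biUnion_le_card_mul S M κ hM)

theorem card_filter_eq_lt_of_two_mul_card_filter_ne_lt [Fintype ι] {C : Type*} [DecidableEq C]
    {v : ι → C} {y z : C} (hz : z ≠ y) (hne : 2 * #{j | v j ≠ y} < Fintype.card ι) :
    #{j | v j = z} < #{j | v j = y} := by
  have hle : #{j | v j = z} ≤ #{j | v j ≠ y} :=
    card_le_card <| monotone_filter_right _ fun _ _ hj => hj.trans_ne hz
  have hsplit : #{j | v j = y} + #{j | v j ≠ y} = Fintype.card ι :=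
    card_filter_add_card_filter_not fun j => v j = y
  omega

end Majority

/-- For `τ i = t i ^ q` and `c i = a i ^ q`, this certifies against perturbations measured by the
`ℓ^q` norm. -/
theorem certified_l2_majority_robustness_general {N p κ : ℕ} {R : Type*} [AddCommMonoid R]
    [Preorder R] [IsOrderedAddMonoid R] {P ι : Type*} [Fintype P] [Fintype ι] {τ c : P → R}
    {e : Fin N ≃ P} (he : Monotone (τ ∘ e)) (hpN : p + 1 ≤ N) (hc : ∀ i, 0 ≤ c i)
    {M : P → Finset ι} (hM : ∀ i, #(M i) ≤ κ) (hp : 2 * (p * κ) < Fintype.card ι)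
    {C : Type*} [DecidableEq C] {v' : ι → C} {y : C}
    (hbudget : ∑ i, c i < ∑ j : Fin (p + 1), τ (e (Fin.castLE hpN j)))
    (hflip : ∀ j, v' j ≠ y → ∃ i, j ∈ M i ∧ τ i ≤ c i) {z : C} (hz : z ≠ y) :
    #{j | v' j = z} < #{j | v' j = y} := by
  classical
  have hmoved : #{i | τ i ≤ c i} ≤ p := Nat.lt_succ_iff.1 <|
    card_lt_of_sum_lt_sum_smallest he hpN hc hbudget fun _ hi => (mem_filter.1 hi).2
  have hflipped : #{j | v' j ≠ y} ≤ #{i | τ i ≤ c i} * κ :=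
    card_le_card_mul_of_forall_exists_mem (fun i _ => hM i) fun j hj => by
      obtain ⟨i, hji, hi⟩ := hflip j (mem_filter.1 hj).2
      exact ⟨i, mem_filter.2 ⟨mem_univ i, hi⟩, hji⟩
  refine card_filter_eq_lt_of_two_mul_card_filter_ne_lt hz (lt_of_le_of_lt ?_ hp)
  gcongr
  exact hflipped.trans (Nat.mul_le_mul_right κ hmoved)

theorem certified_l2_majority_robustness (N m κ : ℕ) (hN : 1 ≤ N) (hm : 1 ≤ m)
    (hκ : 1 ≤ κ) (hpN : (m - 1) / 2 / κ + 1 ≤ N)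
    (t : Fin N → ℝ) (ht : ∀ i, 0 < t i)
    (a : Fin N → ℝ) (ha : ∀ i, 0 ≤ a i)
    (M : Fin N → Finset (Fin m)) (hM : ∀ i, (M i).card ≤ κ)
    (C : Type*) [DecidableEq C] (v' : Fin m → C) (y : C)
    (hbudget : ∑ i, a i ^ 2 <
      ∑ j : Fin ((m - 1) / 2 / κ + 1), t (Tuple.sort t (Fin.castLE hpN j)) ^ 2)
    (hflip : ∀ j : Fin m, v' j ≠ y → ∃ i : Fin N, j ∈ M i ∧ t i ≤ a i) :
    ∀ z : C, z ≠ y →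
      (Finset.univ.filter (fun j : Fin m => v' j = z)).card <
        (Finset.univ.filter (fun j : Fin m => v' j = y)).card := by
  have hsq {i : Fin N} {x : ℝ} (h : t i ≤ x) : t i ^ 2 ≤ x ^ 2 := pow_le_pow_left₀ (ht i).le h 2
  have hp : 2 * ((m - 1) / 2 / κ * κ) < Fintype.card (Fin m) := by
    have := Nat.div_mul_le_self ((m - 1) / 2) κ
    rw [Fintype.card_fin]
    omega
  exact fun z hz => certified_l2_majority_robustness_general (τ := fun i => t i ^ 2)
    (fun _ _ hij => hsq (Tuple.monotone_sort t hij)) hpN (fun i => sq_nonneg (a i)) hM hp hbudget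
    (fun j hj => (hflip j hj).imp fun _ h => ⟨h.1, hsq h.2⟩) hz
end

section
/- Let N ≥ 1, let t : Fin N → ℝ with t_i > 0 for all i, let q ≤ N, and let t_{(1)} ≤ ⋯ ≤ t_{(N)} be the values of t sorted in ascending order. Then there exists a : Fin N → ℝ with a_i ≥ 0 for all i such that ∑_i a_i² = ∑_{j=1}^{q} t_{(j)}² and the number of indices i with a_i ≥ t_i is exactly q. -/
open Finset

theorem le_indicator_self_iff_mem {ι R : Type*} [Zero R] [Preorder R] {s : Set ι} {t : ι → R}
    {i : ι} (hi : 0 < t i) : t i ≤ s.indicator t i ↔ i ∈ s := by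
  by_cases his : i ∈ s
  · simp only [Set.indicator_of_mem his, le_refl, his]
  · simp only [Set.indicator_of_notMem his, hi.not_ge, his]

theorem tightness_of_budget_general {ι R M : Type*} [Fintype ι] [Zero R] [Preorder R]
    [AddCommMonoid M] {t : ι → R} (ht : ∀ i, 0 < t i) {cost : ι → R → M}
    (hcost : ∀ i, cost i 0 = 0) (s : Finset ι) :
    ∃ a : ι → R, (∀ i, 0 ≤ a i) ∧ ∑ i, cost i (a i) = ∑ i ∈ s, cost i (t i) ∧
      ∀ i, t i ≤ a i ↔ i ∈ s :=
  ⟨(s : Set ι).indicator t,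
    Set.indicator_nonneg fun i _ ↦ (ht i).le,
    sum_indicator_subset_of_eq_zero t cost (subset_univ s) hcost,
    fun i ↦ le_indicator_self_iff_mem (ht i)⟩

theorem tightness_of_budget (N : ℕ) (hN : 1 ≤ N) (t : Fin N → ℝ)
    (ht : ∀ i, 0 < t i) (q : ℕ) (hq : q ≤ N) :
    ∃ a : Fin N → ℝ, (∀ i, 0 ≤ a i) ∧
      ∑ i, a i ^ 2 = ∑ j : Fin q, t (Tuple.sort t (Fin.castLE hq j)) ^ 2 ∧
      (Finset.univ.filter (fun i : Fin N => t i ≤ a i)).card = q := by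
  obtain ⟨a, ha_nonneg, ha_cost, ha_flip⟩ := tightness_of_budget_general ht
    (cost := fun _ x ↦ x ^ 2) (fun _ ↦ zero_pow two_ne_zero)
    (univ.map ((Fin.castLEEmb hq).trans (Tuple.sort t).toEmbedding))
  exact ⟨a, ha_nonneg, ha_cost.trans (sum_map _ _ _),
    by simp only [ha_flip, filter_univ_mem, card_map, card_univ, Fintype.card_fin]⟩
end
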